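/- arXiv:1205.5906 — 4 statements merged into one kernel-verified Lean document; each statement's English description precedes it below -/
import Mathlib

section
/- Let μ₁ be a probability measure on a measurable space Ω, let L : Ω → ℝ be measurable, let μ₀ := μ₁.withDensity (fun ω => ENNReal.ofReal (Real.exp (−L ω))), and let A ∈ ℝ, Θ ≥ 0. Suppose for μ₁-almost every ω in the event E := {ω | A ≤ L ω} one has L ω ≤ A + Θ. Set α := (μ₀ E).toReal and p := (μ₁ E).toReal, and assume α > 0 and p > 0. Then A ≤ Real.log (p / α) ≤ A + Θ. -/
open MeasureTheory

open scoped ENNReal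

section WithDensity

variable {Ω : Type*} [MeasurableSpace Ω] {μ : Measure Ω} {f : Ω → ℝ≥0∞} {c : ℝ≥0∞} {E : Set Ω}

theorem withDensity_apply_le_mul_of_ae_le (hE : NullMeasurableSet E μ)
    (hf : ∀ᵐ ω ∂μ.restrict E, f ω ≤ c) : μ.withDensity f E ≤ c * μ E :=
  calc μ.withDensity f E = ∫⁻ ω in E, f ω ∂μ := withDensity_apply₀ f hE
    _ ≤ ∫⁻ _ in E, c ∂μ := lintegral_mono_ae hf
    _ = c * μ E := setLIntegral_const E c

theorem mul_le_withDensity_apply_of_ae_le (hf : ∀ᵐ ω ∂μ.restrict E, c ≤ f ω) :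
    c * μ E ≤ μ.withDensity f E :=
  calc c * μ E = ∫⁻ _ in E, c ∂μ := (setLIntegral_const E c).symm
    _ ≤ ∫⁻ ω in E, f ω ∂μ := lintegral_mono_ae hf
    _ ≤ μ.withDensity f E := withDensity_apply_le f E

end WithDensity

theorem le_log_div_iff_le_exp_neg_mul {a x y : ℝ} (hx : 0 < x) (hy : 0 < y) :
    a ≤ Real.log (x / y) ↔ y ≤ Real.exp (-a) * x := by
  rw [Real.le_log_iff_exp_le (div_pos hx hy), le_div_iff₀ hy, Real.exp_neg,
    le_inv_mul_iff₀ (Real.exp_pos a)]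

theorem log_div_le_iff_exp_neg_mul_le {b x y : ℝ} (hx : 0 < x) (hy : 0 < y) :
    Real.log (x / y) ≤ b ↔ Real.exp (-b) * x ≤ y := by
  rw [Real.log_le_iff_le_exp (div_pos hx hy), div_le_iff₀ hy, Real.exp_neg,
    inv_mul_le_iff₀ (Real.exp_pos b)]

theorem sprt_threshold_asymptotics_general {Ω : Type*} [MeasurableSpace Ω] {μ₁ : Measure Ω}
    {L : Ω → ℝ} {E : Set Ω} (hE : NullMeasurableSet E μ₁) {A B : ℝ}
    (hL : ∀ᵐ ω ∂μ₁, ω ∈ E → A ≤ L ω ∧ L ω ≤ B) (hpos : 0 < μ₁.real E) :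
    A ≤ Real.log (μ₁.real E / (μ₁.withDensity fun ω => .ofReal (Real.exp (-L ω))).real E) ∧
      Real.log (μ₁.real E / (μ₁.withDensity fun ω => .ofReal (Real.exp (-L ω))).real E) ≤ B := by
  rw [← ae_restrict_iff'₀ hE] at hL
  set μ₀ := μ₁.withDensity fun ω => .ofReal (Real.exp (-L ω))
  have upper : μ₀ E ≤ .ofReal (Real.exp (-A)) * μ₁ E :=
    withDensity_apply_le_mul_of_ae_le hE <| hL.mono fun ω h => by gcongr; exact h.1
  have lower : .ofReal (Real.exp (-B)) * μ₁ E ≤ μ₀ E :=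
    mul_le_withDensity_apply_of_ae_le <| hL.mono fun ω h => by gcongr; exact h.2
  have μ₁_ne_top : μ₁ E ≠ ∞ := (ENNReal.toReal_pos_iff.1 hpos).2.ne
  have μ₀_ne_top : μ₀ E ≠ ∞ := ne_top_of_le_ne_top (by finiteness) upper
  have real_upper : μ₀.real E ≤ Real.exp (-A) * μ₁.real E := by
    simpa [Measure.real, Real.exp_nonneg] using ENNReal.toReal_mono (by finiteness) upper
  have real_lower : Real.exp (-B) * μ₁.real E ≤ μ₀.real E := by
    simpa [Measure.real, Real.exp_nonneg] using ENNReal.toReal_mono μ₀_ne_top lower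
  have μ₀_pos : 0 < μ₀.real E := (mul_pos (Real.exp_pos _) hpos).trans_le real_lower
  exact ⟨(le_log_div_iff_le_exp_neg_mul hpos μ₀_pos).2 real_upper,
    (log_div_le_iff_exp_neg_mul_le hpos μ₀_pos).2 real_lower⟩

/-- Key quantitative step in Lemma 1: with overshoot bounded by `Θ` on the stopping region
`E = {L ≥ A}`, the false-alarm probability `α = μ₀(E)` and detection probability
`p = μ₁(E)` satisfy `A ≤ log(p/α) ≤ A + Θ`. -/
theorem sprt_threshold_asymptotics {Ω : Type*} [MeasurableSpace Ω]
    (μ₁ : Measure Ω) [IsProbabilityMeasure μ₁] (L : Ω → ℝ) (hL : Measurable L)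
    (μ₀ : Measure Ω)
    (hμ₀ : μ₀ = μ₁.withDensity (fun ω => ENNReal.ofReal (Real.exp (-L ω))))
    (A Θ : ℝ) (hΘ : 0 ≤ Θ) (E : Set Ω) (hE : E = {ω | A ≤ L ω})
    (hover : ∀ᵐ ω ∂μ₁, ω ∈ E → L ω ≤ A + Θ)
    (α p : ℝ) (hα : α = (μ₀ E).toReal) (hp : p = (μ₁ E).toReal)
    (hαpos : 0 < α) (hppos : 0 < p) :
    A ≤ Real.log (p / α) ∧ Real.log (p / α) ≤ A + Θ := by
  subst hα hp hμ₀ hE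
  exact sprt_threshold_asymptotics_general (measurableSet_le measurable_const hL).nullMeasurableSet
    (hover.mono fun ω h hω => ⟨hω, h hω⟩) hppos
end

section
/- Let μ₀ be a probability measure on a measurable space Ω, let L : Ω → ℝ be measurable, let μ₁ := μ₀.withDensity (fun ω => ENNReal.ofReal (Real.exp (L ω))), and let B ∈ ℝ, Θ ≥ 0. Suppose for μ₀-almost every ω in the event E := {ω | L ω ≤ −B} one has −(B + Θ) ≤ L ω. Set β := (μ₁ E).toReal and q := (μ₀ E).toReal, and assume β > 0 and q > 0. Then B ≤ Real.log (q / β) ≤ B + Θ. -/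
open MeasureTheory

section WithDensityBounds

variable {Ω : Type*} [MeasurableSpace Ω] {μ : Measure Ω} {s : Set Ω}

theorem withDensity_apply_le_const_mul {f : Ω → ENNReal} {c : ENNReal}
    (hs : NullMeasurableSet s μ) (hf : ∀ᵐ ω ∂μ, ω ∈ s → f ω ≤ c) :
    μ.withDensity f s ≤ c * μ s :=
  calc μ.withDensity f s = ∫⁻ ω in s, f ω ∂μ := withDensity_apply₀ f hs
    _ ≤ ∫⁻ _ in s, c ∂μ := setLIntegral_mono_ae aemeasurable_const hf
    _ = c * μ s := setLIntegral_const s c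

theorem const_mul_le_withDensity_apply {f : Ω → ENNReal} {c : ENNReal}
    (hs : NullMeasurableSet s μ) (hf : ∀ᵐ ω ∂μ, ω ∈ s → c ≤ f ω) :
    c * μ s ≤ μ.withDensity f s :=
  calc c * μ s = ∫⁻ _ in s, c ∂μ := (setLIntegral_const s c).symm
    _ ≤ ∫⁻ ω in s, f ω ∂μ := lintegral_mono_ae ((ae_restrict_iff'₀ hs).2 hf)
    _ ≤ μ.withDensity f s := withDensity_apply_le f s

theorem measureReal_withDensity_exp_mem_Icc {L : Ω → ℝ} {a b : ℝ}
    (hs : NullMeasurableSet s μ) (hμs : μ s ≠ ⊤)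
    (hL : ∀ᵐ ω ∂μ, ω ∈ s → L ω ∈ Set.Icc a b) :
    (μ.withDensity fun ω ↦ ENNReal.ofReal (Real.exp (L ω))).real s ∈
      Set.Icc (Real.exp a * μ.real s) (Real.exp b * μ.real s) := by
  have toReal_exp_mul (c : ℝ) :
      (ENNReal.ofReal (Real.exp c) * μ s).toReal = Real.exp c * μ.real s := by
    rw [ENNReal.toReal_mul, ENNReal.toReal_ofReal (Real.exp_nonneg c), measureReal_def]
  have lower := const_mul_le_withDensity_apply hs <| hL.mono fun ω hω hωs ↦
    ENNReal.ofReal_le_ofReal (Real.exp_le_exp.2 (hω hωs).1)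
  have upper := withDensity_apply_le_const_mul hs <| hL.mono fun ω hω hωs ↦
    ENNReal.ofReal_le_ofReal (Real.exp_le_exp.2 (hω hωs).2)
  have upper_ne_top : ENNReal.ofReal (Real.exp b) * μ s ≠ ⊤ :=
    ENNReal.mul_ne_top ENNReal.ofReal_ne_top hμs
  rw [← toReal_exp_mul a, ← toReal_exp_mul b]
  exact ⟨ENNReal.toReal_mono (ne_top_of_le_ne_top upper_ne_top upper) lower,
    ENNReal.toReal_mono upper_ne_top upper⟩

end WithDensityBounds

theorem sprt_lower_threshold_asymptotics_general {Ω : Type*} [MeasurableSpace Ω]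
    {μ₀ : Measure Ω} {L : Ω → ℝ} {B Θ : ℝ} {E : Set Ω} (hE : NullMeasurableSet E μ₀)
    (hL : ∀ᵐ ω ∂μ₀, ω ∈ E → L ω ∈ Set.Icc (-(B + Θ)) (-B)) (hpos : 0 < μ₀.real E) :
    Real.log (μ₀.real E / (μ₀.withDensity fun ω ↦ ENNReal.ofReal (Real.exp (L ω))).real E) ∈
      Set.Icc B (B + Θ) := by
  have hfin : μ₀ E ≠ ⊤ := (ENNReal.toReal_pos_iff.1 hpos).2.ne
  obtain ⟨lower, upper⟩ := measureReal_withDensity_exp_mem_Icc hE hfin hL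
  have withDensity_pos := (mul_pos (Real.exp_pos _) hpos).trans_le lower
  have ratio_pos := div_pos hpos withDensity_pos
  rw [Real.exp_neg, inv_mul_le_iff₀ (Real.exp_pos _)] at lower
  rw [Real.exp_neg, le_inv_mul_iff₀ (Real.exp_pos _)] at upper
  exact ⟨(Real.le_log_iff_exp_le ratio_pos).2 ((le_div_iff₀ withDensity_pos).2 upper),
    (Real.log_le_iff_le_exp ratio_pos).2 ((div_le_iff₀ withDensity_pos).2 lower)⟩

/-- Lower-threshold counterpart of the key quantitative step in Lemma 1: with undershoot
bounded by `Θ` on the stopping region `E = {L ≤ -B}`, the miss probability `β = μ₁(E)`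
and `q = μ₀(E)` satisfy `B ≤ log(q/β) ≤ B + Θ`. -/
theorem sprt_lower_threshold_asymptotics {Ω : Type*} [MeasurableSpace Ω]
    (μ₀ : Measure Ω) [IsProbabilityMeasure μ₀] (L : Ω → ℝ) (hL : Measurable L)
    (μ₁ : Measure Ω)
    (hμ₁ : μ₁ = μ₀.withDensity (fun ω => ENNReal.ofReal (Real.exp (L ω))))
    (B Θ : ℝ) (hΘ : 0 ≤ Θ) (E : Set Ω) (hE : E = {ω | L ω ≤ -B})
    (hunder : ∀ᵐ ω ∂μ₀, ω ∈ E → -(B + Θ) ≤ L ω)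
    (β q : ℝ) (hβ : β = (μ₁ E).toReal) (hq : q = (μ₀ E).toReal)
    (hβpos : 0 < β) (hqpos : 0 < q) :
    B ≤ Real.log (q / β) ∧ Real.log (q / β) ≤ B + Θ := by
  subst hβ hq hμ₁ hE
  exact sprt_lower_threshold_asymptotics_general
    (measurableSet_le hL measurable_const).nullMeasurableSet
    (hunder.mono fun ω hω hωE ↦ ⟨hω hωE, hωE⟩) hqpos
end

section
/- Let α, β ∈ (0, 1/2) and ε ∈ (0, 1/2), and define α̂ := (1 − 2ε)·α + ε and β̂ := (1 − 2ε)·β + ε. Then 0 < Real.log ((1 − β̂) / α̂) < Real.log ((1 − β) / α) and Real.log (β / (1 − α)) < Real.log (β̂ / (1 − α̂)) < 0. -/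
/-!
Write `α̂`, `β̂` for the error probabilities behind the BSC. Everything reduces to the sign of
`1 - α - β`, through the two identities `1 - α̂ - β̂ = (1 - 2ε)(1 - α - β)` and
`α̂(1 - β) - α(1 - β̂) = ε(1 - α - β)`: the first makes the likelihood ratio `(1 - β̂)/α̂` of a
received `1` exceed `1`, the second keeps it below `(1 - β)/α`. The ratio of a received `0` is the
inverse of the ratio of a received `1` with `α` and `β` exchanged.
-/

/-- The effective error probability seen behind a binary symmetric channel with crossover
probability `ε` when the transmitted bit is wrong with probability `p`. The formula is
`(1 - ε) * p + ε * (1 - p)` with the terms in `p` collected. -/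
def bscErrorProb (ε p : ℝ) : ℝ :=
  (1 - 2 * ε) * p + ε

section BSC

variable {α β ε : ℝ}

lemma bscErrorProb_pos {p : ℝ} (hp : 0 ≤ p) (hε₀ : 0 < ε) (hε : ε ≤ 1 / 2) :
    0 < bscErrorProb ε p :=
  add_pos_of_nonneg_of_pos (mul_nonneg (by linarith) hp) hε₀

lemma one_sub_bscErrorProb_sub_bscErrorProb (ε α β : ℝ) :
    1 - bscErrorProb ε α - bscErrorProb ε β = (1 - 2 * ε) * (1 - α - β) := by
  unfold bscErrorProb
  ring

lemma bscErrorProb_mul_sub_mul_bscErrorProb (ε α β : ℝ) :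
    bscErrorProb ε α * (1 - β) - α * (1 - bscErrorProb ε β) = ε * (1 - α - β) := by
  unfold bscErrorProb
  ring

lemma bscErrorProb_add_bscErrorProb_lt_one (hαβ : α + β < 1) (hε : ε < 1 / 2) :
    bscErrorProb ε α + bscErrorProb ε β < 1 := by
  have h : 0 < (1 - 2 * ε) * (1 - α - β) := mul_pos (by linarith) (by linarith)
  rw [← one_sub_bscErrorProb_sub_bscErrorProb] at h
  linarith

lemma one_lt_bsc_likelihoodRatio (hα : 0 ≤ α) (hαβ : α + β < 1)
    (hε : ε ∈ Set.Ioo (0 : ℝ) (1 / 2)) :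
    1 < (1 - bscErrorProb ε β) / bscErrorProb ε α := by
  rw [one_lt_div (bscErrorProb_pos hα hε.1 hε.2.le), lt_sub_iff_add_lt]
  exact bscErrorProb_add_bscErrorProb_lt_one hαβ hε.2

lemma bsc_likelihoodRatio_lt (hα : 0 < α) (hαβ : α + β < 1) (hε₀ : 0 < ε) (hε : ε ≤ 1 / 2) :
    (1 - bscErrorProb ε β) / bscErrorProb ε α < (1 - β) / α := by
  have h : 0 < ε * (1 - α - β) := mul_pos hε₀ (by linarith)
  rw [← bscErrorProb_mul_sub_mul_bscErrorProb] at h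
  rw [div_lt_div_iff₀ (bscErrorProb_pos hα.le hε₀ hε) hα]
  linarith

lemma bsc_llr_mem_Ioo (hα : 0 < α) (hαβ : α + β < 1) (hε : ε ∈ Set.Ioo (0 : ℝ) (1 / 2)) :
    Real.log ((1 - bscErrorProb ε β) / bscErrorProb ε α) ∈
      Set.Ioo 0 (Real.log ((1 - β) / α)) := by
  have one_lt_ratio := one_lt_bsc_likelihoodRatio hα.le hαβ hε
  exact ⟨Real.log_pos one_lt_ratio, Real.log_lt_log (one_pos.trans one_lt_ratio)
    (bsc_likelihoodRatio_lt hα hαβ hε.1 hε.2.le)⟩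

theorem bsc_llr_smaller_than_bec_general (hα : 0 < α) (hβ : 0 < β) (hαβ : α + β < 1)
    (hε : ε ∈ Set.Ioo (0 : ℝ) (1 / 2)) :
    (0 < Real.log ((1 - bscErrorProb ε β) / bscErrorProb ε α) ∧
      Real.log ((1 - bscErrorProb ε β) / bscErrorProb ε α) < Real.log ((1 - β) / α)) ∧
    (Real.log (β / (1 - α)) < Real.log (bscErrorProb ε β / (1 - bscErrorProb ε α)) ∧
      Real.log (bscErrorProb ε β / (1 - bscErrorProb ε α)) < 0) := by
  refine ⟨bsc_llr_mem_Ioo hα hαβ hε, ?_⟩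
  obtain ⟨llr_pos, llr_lt⟩ := bsc_llr_mem_Ioo hβ (add_comm α β ▸ hαβ) hε
  rw [← inv_div (1 - α), ← inv_div (1 - bscErrorProb ε α), Real.log_inv, Real.log_inv]
  exact ⟨neg_lt_neg llr_lt, neg_neg_of_pos llr_pos⟩

end BSC

/-- Under a BSC with crossover probability `ε`, the magnitude of the LLR of each received
bit, computed from the effective error probabilities `α̂ = (1-2ε)α + ε` and
`β̂ = (1-2ε)β + ε`, is strictly smaller than the corresponding LLR magnitude under
ideal channels (or BEC), and both have the same sign. -/
theorem bsc_llr_smaller_than_bec (α β ε : ℝ)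
    (hα : α ∈ Set.Ioo (0 : ℝ) (1/2)) (hβ : β ∈ Set.Ioo (0 : ℝ) (1/2))
    (hε : ε ∈ Set.Ioo (0 : ℝ) (1/2)) :
    (0 < Real.log ((1 - ((1 - 2*ε)*β + ε)) / ((1 - 2*ε)*α + ε)) ∧
      Real.log ((1 - ((1 - 2*ε)*β + ε)) / ((1 - 2*ε)*α + ε)) < Real.log ((1 - β) / α)) ∧
    (Real.log (β / (1 - α)) < Real.log (((1 - 2*ε)*β + ε) / (1 - ((1 - 2*ε)*α + ε))) ∧
      Real.log (((1 - 2*ε)*β + ε) / (1 - ((1 - 2*ε)*α + ε))) < 0) :=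
  bsc_llr_smaller_than_bec_general hα.1 hβ.1 (by linarith [hα.2, hβ.2]) hε
end

section
/- Let F, G ∈ ℝ with F > 1, G > 1, and G² ≥ F. Define g : ℝ → ℝ by g(x) = ((F/G − G)·exp(2x) + (F·G + 1)·(G⁻¹ − 1)·exp x + (1 − F)) / ((1 + G·exp x)·(1 + F⁻¹·exp x)·(1 + G⁻¹·exp x)·(1 + F·exp x)). Then for all p, q ∈ ℝ with p > q and p + q > 0, one has g(p) > g(q). -/
open Real

/-!
Multiplying numerator and denominator by `exp (-2 * x)` turns the denominator into a product of
two factors `2 * cosh x + (c + c⁻¹)`, a positive increasing function of `|x|`, and the numerator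
into a quadratic polynomial in `exp (-x)` with nonpositive coefficients, a negative strictly
increasing function of `x`. The conditions `q < p` and `0 < p + q` say `|q| < p`, so passing
from `q` to `p` increases the numerator and then divides a negative number by more.
-/

lemma one_add_mul_exp_mul_one_add_inv_mul_exp {c : ℝ} (hc : c ≠ 0) (x : ℝ) :
    (1 + c * exp x) * (1 + c⁻¹ * exp x) = exp x * (2 * cosh x + (c + c⁻¹)) := by
  have hexp : exp x * exp (-x) = 1 := by rw [← exp_add, add_neg_cancel, exp_zero]
  rw [cosh_eq]
  linear_combination exp x ^ 2 * mul_inv_cancel₀ hc - hexp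

lemma quadratic_exp_eq_exp_mul (a₂ a₁ a₀ x : ℝ) :
    a₂ * exp (2 * x) + a₁ * exp x + a₀
      = exp (2 * x) * (a₂ + a₁ * exp (-x) + a₀ * exp (-(2 * x))) := by
  have hlin : exp (2 * x) * exp (-x) = exp x := by rw [← exp_add]; ring_nf
  have hconst : exp (2 * x) * exp (-(2 * x)) = 1 := by rw [← exp_add, add_neg_cancel, exp_zero]
  linear_combination -a₁ * hlin - a₀ * hconst

lemma quadratic_exp_div_eq_div_cosh {c d : ℝ} (hc : c ≠ 0) (hd : d ≠ 0) (a₂ a₁ a₀ x : ℝ) :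
    (a₂ * exp (2 * x) + a₁ * exp x + a₀) /
        ((1 + d * exp x) * (1 + c⁻¹ * exp x) * (1 + d⁻¹ * exp x) * (1 + c * exp x))
      = (a₂ + a₁ * exp (-x) + a₀ * exp (-(2 * x))) /
        ((2 * cosh x + (c + c⁻¹)) * (2 * cosh x + (d + d⁻¹))) := by
  have hden : (1 + d * exp x) * (1 + c⁻¹ * exp x) * (1 + d⁻¹ * exp x) * (1 + c * exp x)
      = exp (2 * x) * ((2 * cosh x + (c + c⁻¹)) * (2 * cosh x + (d + d⁻¹))) := calc
    _ = ((1 + c * exp x) * (1 + c⁻¹ * exp x)) * ((1 + d * exp x) * (1 + d⁻¹ * exp x)) := by ring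
    _ = _ := by
      rw [one_add_mul_exp_mul_one_add_inv_mul_exp hc, one_add_mul_exp_mul_one_add_inv_mul_exp hd,
        two_mul x, exp_add]
      ring
  rw [hden, quadratic_exp_eq_exp_mul, mul_div_mul_left _ _ (exp_ne_zero _)]

lemma strictMono_quadratic_exp_neg {a₁ a₀ : ℝ} (h₁ : a₁ < 0) (h₀ : a₀ ≤ 0) (a₂ : ℝ) :
    StrictMono fun x ↦ a₂ + a₁ * exp (-x) + a₀ * exp (-(2 * x)) := by
  intro x y hxy
  have hlin : a₁ * exp (-x) < a₁ * exp (-y) :=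
    mul_lt_mul_of_neg_left (exp_lt_exp.2 (neg_lt_neg hxy)) h₁
  have hquad : a₀ * exp (-(2 * x)) ≤ a₀ * exp (-(2 * y)) :=
    mul_le_mul_of_nonpos_left (exp_le_exp.2 (by linarith)) h₀
  dsimp only
  linarith

lemma two_mul_cosh_add_pos {c : ℝ} (hc : -2 < c) (x : ℝ) : 0 < 2 * cosh x + c := by
  linarith [one_le_cosh x]

lemma quadratic_exp_neg_div_cosh_lt {a₂ a₁ a₀ c d x y : ℝ} (h₂ : a₂ ≤ 0) (h₁ : a₁ < 0)
    (h₀ : a₀ ≤ 0) (hc : -2 < c) (hd : -2 < d) (hxy : |x| < y) :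
    (a₂ + a₁ * exp (-x) + a₀ * exp (-(2 * x))) / ((2 * cosh x + c) * (2 * cosh x + d))
      < (a₂ + a₁ * exp (-y) + a₀ * exp (-(2 * y))) / ((2 * cosh y + c) * (2 * cosh y + d)) := by
  have hcx := two_mul_cosh_add_pos hc x
  have hdx := two_mul_cosh_add_pos hd x
  have hcosh : cosh x ≤ cosh y := cosh_le_cosh.2 (hxy.le.trans (le_abs_self y))
  have hden : (2 * cosh x + c) * (2 * cosh x + d) ≤ (2 * cosh y + c) * (2 * cosh y + d) :=
    mul_le_mul (by gcongr) (by gcongr) hdx.le (two_mul_cosh_add_pos hc y).le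
  have hnum : a₂ + a₁ * exp (-y) + a₀ * exp (-(2 * y)) ≤ 0 :=
    add_nonpos (add_nonpos h₂ (mul_nonpos_of_nonpos_of_nonneg h₁.le (exp_nonneg _)))
      (mul_nonpos_of_nonpos_of_nonneg h₀ (exp_nonneg _))
  calc
    _ < (a₂ + a₁ * exp (-y) + a₀ * exp (-(2 * y))) / ((2 * cosh x + c) * (2 * cosh x + d)) :=
      div_lt_div_of_pos_right
        (strictMono_quadratic_exp_neg h₁ h₀ a₂ ((le_abs_self x).trans_lt hxy)) (mul_pos hcx hdx)
    _ ≤ _ := by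
      rw [div_eq_mul_inv, div_eq_mul_inv]
      exact mul_le_mul_of_nonpos_left (inv_anti₀ (mul_pos hcx hdx) hden) hnum

/-- The pointwise sufficient inequality (app:aw3) in the Appendix proof of Lemma 2:
the function `g` below satisfies `g p > g q` whenever `p > q` and `p + q > 0`,
for `F, G > 1` with `G² ≥ F`. -/
theorem appendix_pointwise_inequality (F G : ℝ) (hF : 1 < F) (hG : 1 < G)
    (hG2F : F ≤ G^2)
    (g : ℝ → ℝ)
    (hg : g = fun x =>
      ((F/G - G) * exp (2*x) + (F*G + 1) * (G⁻¹ - 1) * exp x + (1 - F)) /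
        ((1 + G * exp x) * (1 + F⁻¹ * exp x) * (1 + G⁻¹ * exp x) * (1 + F * exp x))) :
    ∀ p q : ℝ, q < p → 0 < p + q → g q < g p := by
  intro p q hqp hpq
  have hF0 : 0 < F := one_pos.trans hF
  have hG0 : 0 < G := one_pos.trans hG
  have hquad : F / G - G ≤ 0 := by
    rw [sub_nonpos, div_le_iff₀ hG0, ← sq]
    exact hG2F
  have hlin : (F * G + 1) * (G⁻¹ - 1) < 0 :=
    mul_neg_of_pos_of_neg (by positivity) (sub_neg.2 (inv_lt_one_of_one_lt₀ hG))
  have hconst : 1 - F ≤ 0 := sub_nonpos.2 hF.le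
  have hF2 : -2 < F + F⁻¹ := by linarith [inv_pos.2 hF0]
  have hG2 : -2 < G + G⁻¹ := by linarith [inv_pos.2 hG0]
  have habs : |q| < p := abs_lt.2 ⟨neg_lt_iff_pos_add'.2 hpq, hqp⟩
  simp only [hg, quadratic_exp_div_eq_div_cosh hF0.ne' hG0.ne']
  exact quadratic_exp_neg_div_cosh_lt hquad hlin hconst hF2 hG2 habs
end
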